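/- Let m ≥ 0 and let s be an integer with s ≤ ⌊((m+4)(m+3)(m+1)/2 − m − 2)/3⌋. For a general tuple of nonzero vectors v_1,…,v_s ∈ ℂ⁴, the linear map from symmetric m-multilinear maps M : (ℂ⁴)^m → Λ²ℂ⁴ to ⊕_{i=1}^s Λ²ℂ⁴/(v_i ∧ ℂ⁴) sending M to (M(v_i,…,v_i) mod v_i ∧ ℂ⁴)_{i=1,…,s} is surjective; equivalently, the subspace of those M with M(v_i^m) ∧ v_i = 0 in Λ³ℂ⁴ for all i has codimension exactly 3s, i.e. dimension 6·binom(m+3,3) − 3s. -/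

import Mathlib

open MvPolynomial ExteriorAlgebra

/-- The basis wedge `e_S = e_{j_1} ∧ ⋯ ∧ e_{j_b}` (indices of `S` in increasing order),
as an element of the exterior algebra of `ℂ^k`. -/
noncomputable def eWedge (k : ℕ) (S : Finset (Fin k)) : ExteriorAlgebra ℂ (Fin k → ℂ) :=
  ((S.sort (· ≤ ·)).map fun j => ExteriorAlgebra.ι ℂ (Pi.single j (1:ℂ))).prod

/-- The value `M(v^m) ∈ Λ^b ℂ^k` of the tensor `M ∈ Hom(S^m ℂ^k, Λ^b ℂ^k)` represented by
the family of polynomials `q = (q_S)_{|S| = b}`, namely `Σ_S q_S(v) · e_S`. -/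
noncomputable def tval (k b : ℕ)
    (q : {S : Finset (Fin k) // S.card = b} → MvPolynomial (Fin k) ℂ)
    (v : Fin k → ℂ) : ExteriorAlgebra ℂ (Fin k → ℂ) :=
  ∑ S : {S : Finset (Fin k) // S.card = b}, MvPolynomial.eval v (q S) • eWedge k S.1

/-! ### Bivectors in `Λ²ℂ⁴` -/

/-- The index set of the coordinates on `Λ²ℂ⁴`. -/
abbrev Pairs := {S : Finset (Fin 4) // S.card = 2}

/-- The pair `{i, j}`, for `i < j`. -/
def pair (i j : Fin 4) (h : i < j := by decide) : Pairs :=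
  ⟨{i, j}, Finset.card_pair h.ne⟩

/-- The generator `e_j` of the exterior algebra. -/
noncomputable def eGen (j : Fin 4) : ExteriorAlgebra ℂ (Fin 4 → ℂ) :=
  ι ℂ (Pi.single j (1 : ℂ))

theorem eWedge_pair (i j : Fin 4) (h : i < j) :
    eWedge 4 (pair i j h).1 = eGen i * eGen j := by
  have : ({i, j} : Finset (Fin 4)).sort (· ≤ ·) = [i, j] := by
    rw [Finset.sort_insert] <;> simp [h.le, h.ne]
  simp [eWedge, eGen, pair, this]

theorem sum_pairs {M : Type*} [AddCommMonoid M] (f : Pairs → M) :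
    ∑ S, f S = f (pair 0 1) + f (pair 0 2) + f (pair 0 3) + f (pair 1 2)
      + f (pair 1 3) + f (pair 2 3) := by
  have : (Finset.univ : Finset Pairs) =
    {(pair 0 1), (pair 0 2), (pair 0 3), (pair 1 2), (pair 1 3), (pair 2 3)} := by
    decide
  rw [this]
  repeat rw [Finset.sum_insert (by decide)]
  simp only [Finset.sum_singleton, add_assoc]

/-- The Plücker coordinates `a_i b_j - a_j b_i` (with `i < j`) of `a ∧ b`. -/
noncomputable def plucker (a b : Fin 4 → ℂ) (S : Pairs) : ℂ :=
  let i := S.1.min' (Finset.card_pos.1 (by rw [S.2]; norm_num))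
  let j := S.1.max' (Finset.card_pos.1 (by rw [S.2]; norm_num))
  a i * b j - a j * b i

theorem plucker_pair (a b : Fin 4 → ℂ) (i j : Fin 4) (h : i < j) :
    plucker a b (pair i j h) = a i * b j - a j * b i := by
  have h₁ : ∀ hne, ({i, j} : Finset (Fin 4)).min' hne = i := by revert i j; decide
  have h₂ : ∀ hne, ({i, j} : Finset (Fin 4)).max' hne = j := by revert i j; decide
  simp only [plucker, pair, h₁, h₂]

theorem ι_mul_ι_swap (a b : Fin 4 → ℂ) : ι ℂ a * ι ℂ b = -(ι ℂ b * ι ℂ a) := by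
  have := ι_add_mul_swap (R := ℂ) a b
  exact eq_neg_of_add_eq_zero_left this

theorem ι_mul_ι_eq_sum (a b : Fin 4 → ℂ) :
    ι ℂ a * ι ℂ b = ∑ S, plucker a b S • eWedge 4 S.1 := by
  have expand : ∀ c : Fin 4 → ℂ, ι ℂ c = c 0 • eGen 0
      + c 1 • eGen 1 + c 2 • eGen 2 + c 3 • eGen 3 := by
    intro c
    simp only [eGen, ← map_smul, ← map_add]
    congr 1
    funext k
    fin_cases k <;> simp
  have swap : ∀ i j, eGen j * eGen i = -(eGen i * eGen j) := fun i j => ι_mul_ι_swap _ _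
  have sq : ∀ i, eGen i * eGen i = 0 := fun i => ι_sq_zero _
  rw [sum_pairs, expand a, expand b]
  simp only [eWedge_pair, plucker_pair]
  simp only [add_mul, mul_add, smul_mul_smul_comm, sq, smul_zero, swap 0 1, swap 0 2,
    swap 0 3, swap 1 2, swap 1 3, swap 2 3]
  module

theorem exists_coords_of_mem_exteriorPower_two {y : ExteriorAlgebra ℂ (Fin 4 → ℂ)}
    (hy : y ∈ ⋀[ℂ]^2 (Fin 4 → ℂ)) :
    ∃ c : Pairs → ℂ, y = ∑ S, c S • eWedge 4 S.1 := by
  rw [exteriorPower, pow_two] at hy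
  induction hy using Submodule.mul_induction_on' with
  | mem_mul_mem x hx y hy =>
    obtain ⟨a, rfl⟩ := hx
    obtain ⟨b, rfl⟩ := hy
    exact ⟨_, ι_mul_ι_eq_sum a b⟩
  | add x _ y _ hx hy =>
    obtain ⟨c, rfl⟩ := hx
    obtain ⟨c', rfl⟩ := hy
    exact ⟨c + c', by simp [add_smul, Finset.sum_add_distrib]⟩

/-- The coordinates of `v ∧ w ∈ Λ³` at `e₀₁₂`, `e₀₁₃` and `e₀₂₃`, for a vector `v` and a
bivector `w` in four variables. -/
def wedgeCoord {R : Type*} [CommRing R] (v : Fin 4 → R)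
    (w : Pairs → R) : Fin 3 → R :=
  ![v 0 * w (pair 1 2) - v 1 * w (pair 0 2) + v 2 * w (pair 0 1),
    v 0 * w (pair 1 3) - v 1 * w (pair 0 3) + v 3 * w (pair 0 1),
    v 0 * w (pair 2 3) - v 2 * w (pair 0 3) + v 3 * w (pair 0 2)]

theorem map_wedgeCoord {R R' : Type*} [CommRing R] [CommRing R'] (φ : R →+* R') (v : Fin 4 → R)
    (w : Pairs → R) (a : Fin 3) :
    φ (wedgeCoord v w a) = wedgeCoord (fun k => φ (v k)) (fun S => φ (w S)) a := by
  fin_cases a <;> simp [wedgeCoord]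

theorem wedgeCoord_sum_mul {R κ : Type*} [CommRing R] [Fintype κ] (v : Fin 4 → R) (c : κ → R)
    (w : κ → Pairs → R) (a : Fin 3) :
    wedgeCoord v (fun S => ∑ k, c k * w k S) a = ∑ k, c k * wedgeCoord v (w k) a := by
  fin_cases a <;>
    simp only [wedgeCoord, Finset.mul_sum, ← Finset.sum_sub_distrib, ← Finset.sum_add_distrib] <;>
    exact Finset.sum_congr rfl fun k _ => by simp; ring

/-- Where `v₀ ≠ 0`, the three coordinates of `v ∧ w` containing the index `0` detect whether
the bivector `w` is divisible by `v`. -/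
theorem exists_eq_ι_mul_ι {v : Fin 4 → ℂ} (hv : v 0 ≠ 0)
    {w y : Pairs → ℂ} (h : wedgeCoord v w = wedgeCoord v y) :
    ∃ u : Fin 4 → ℂ, ∑ S, w S • eWedge 4 S.1 - ∑ S, y S • eWedge 4 S.1 = ι ℂ v * ι ℂ u := by
  refine ⟨![0, (w (pair 0 1) - y (pair 0 1)) / v 0,
    (w (pair 0 2) - y (pair 0 2)) / v 0, (w (pair 0 3) - y (pair 0 3)) / v 0], ?_⟩
  have h₀ := congrFun h 0
  have h₁ := congrFun h 1
  have h₂ := congrFun h 2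
  simp only [wedgeCoord, Matrix.cons_val] at h₀ h₁ h₂
  rw [ι_mul_ι_eq_sum, ← Finset.sum_sub_distrib]
  simp only [← sub_smul]
  refine Finset.sum_congr rfl fun S _ => ?_
  congr 1
  have cases : ∀ S : Pairs, S = pair 0 1 ∨ S = pair 0 2 ∨
    S = pair 0 3 ∨ S = pair 1 2 ∨ S = pair 1 3 ∨ S = pair 2 3 := by decide
  rcases cases S with rfl | rfl | rfl | rfl | rfl | rfl
  · simp only [plucker_pair, Matrix.cons_val]
    field_simp
    ring
  · simp only [plucker_pair, Matrix.cons_val]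
    field_simp
    ring
  · simp only [plucker_pair, Matrix.cons_val]
    field_simp
    ring
  · simp only [plucker_pair, Matrix.cons_val]
    field_simp
    linear_combination h₀
  · simp only [plucker_pair, Matrix.cons_val]
    field_simp
    linear_combination h₁
  · simp only [plucker_pair, Matrix.cons_val]
    field_simp
    linear_combination h₂

/-! ### Forms of degree `m` on lattice points and on a rational curve -/

/-- The affine lattice point `β + (1, 1, 1)`, off the plane `x₃ = 0`. -/
def latticePoint (β : Fin 3 → ℕ) : Fin 4 → ℂ :=
  ![(β 0 : ℂ) + 1, (β 1 : ℂ) + 1, (β 2 : ℂ) + 1, 1]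

/-- A geometric progression of points on the curve `(1, θ, θ^(m+2), 0)` in the plane `x₃ = 0`. -/
def curvePoint (m j : ℕ) : Fin 4 → ℂ :=
  ![1, 2 ^ j, (2 ^ (m + 2)) ^ j, 0]

/-- The homogenization in degree `m` of the shifted falling factorial with exponent `α`. -/
noncomputable def fallingForm (m : ℕ) (α : Fin 3 → ℕ) : MvPolynomial (Fin 4) ℂ :=
  (∏ i : Fin 3, ∏ l ∈ Finset.range (α i), (X i.castSucc - C ((l : ℂ) + 1) * X 3)) *
    X 3 ^ (m - ∑ i, α i)

theorem isHomogeneous_fallingForm {m : ℕ} {α : Fin 3 → ℕ} (h : ∑ i, α i ≤ m) :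
    (fallingForm m α).IsHomogeneous m := by
  have hlin : ∀ (i : Fin 3) (l : ℕ),
      (X i.castSucc - C ((l : ℂ) + 1) * X 3 : MvPolynomial (Fin 4) ℂ).IsHomogeneous 1 := by
    intro i l
    refine (isHomogeneous_X _ _).sub ?_
    simpa using (isHomogeneous_C (Fin 4) ((l : ℂ) + 1)).mul (isHomogeneous_X ℂ (3 : Fin 4))
  have hprod : (∏ i : Fin 3, ∏ l ∈ Finset.range (α i),
      (X i.castSucc - C ((l : ℂ) + 1) * X 3 : MvPolynomial (Fin 4) ℂ)).IsHomogeneous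
      (∑ i, α i) := by
    refine IsHomogeneous.prod _ _ _ fun i _ => ?_
    simpa using IsHomogeneous.prod (Finset.range (α i)) _ (fun _ => 1) fun l _ => hlin i l
  have := hprod.mul (isHomogeneous_X_pow (R := ℂ) (3 : Fin 4) (m - ∑ i, α i))
  rwa [Nat.add_sub_cancel' h] at this

theorem eval_latticePoint_fallingForm (m : ℕ) (α β : Fin 3 → ℕ) :
    eval (latticePoint β) (fallingForm m α) =
      ∏ i : Fin 3, ∏ l ∈ Finset.range (α i), ((β i : ℂ) - l) := by
  have h : ∀ i : Fin 3, latticePoint β i.castSucc = (β i : ℂ) + 1 := by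
    intro i; fin_cases i <;> simp [latticePoint]
  have h3 : latticePoint β 3 = 1 := by simp [latticePoint]
  simp [fallingForm, h, h3]

theorem eval_latticePoint_fallingForm_eq_zero {m : ℕ} {α β : Fin 3 → ℕ}
    (h : ∑ i, β i ≤ ∑ i, α i) (hne : β ≠ α) :
    eval (latticePoint β) (fallingForm m α) = 0 := by
  obtain ⟨i, hi⟩ : ∃ i, β i < α i := by
    by_contra! hle
    exact hne (funext fun i => ((Finset.sum_eq_sum_iff_of_le fun i _ => hle i).1
      (le_antisymm (Finset.sum_le_sum fun i _ => hle i) h) i (Finset.mem_univ i)).symm)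
  rw [eval_latticePoint_fallingForm]
  exact Finset.prod_eq_zero (Finset.mem_univ i)
    (Finset.prod_eq_zero (Finset.mem_range.2 hi) (sub_self _))

theorem eval_latticePoint_fallingForm_self_ne_zero (m : ℕ) (α : Fin 3 → ℕ) :
    eval (latticePoint α) (fallingForm m α) ≠ 0 := by
  rw [eval_latticePoint_fallingForm]
  refine Finset.prod_ne_zero_iff.2 fun i _ => Finset.prod_ne_zero_iff.2 fun l hl => ?_
  rw [sub_ne_zero, Ne, Nat.cast_inj]
  exact (Finset.mem_range.1 hl).ne'

theorem eval_curvePoint_fallingForm {m : ℕ} {α : Fin 3 → ℕ} (h : ∑ i, α i = m) (j : ℕ) :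
    eval (curvePoint m j) (fallingForm m α) = ((2 : ℂ) ^ (α 1 + (m + 2) * α 2)) ^ j := by
  have h3 : curvePoint m j 3 = 0 := by simp [curvePoint]
  simp only [fallingForm, map_mul, map_prod, map_sub, eval_X, h3, h, eval_C, mul_zero, sub_zero,
    Finset.prod_const, Finset.card_range, Nat.sub_self, pow_zero, mul_one,
    Fin.prod_univ_three]
  simp only [curvePoint, Fin.castSucc_zero, Fin.castSucc_one, Matrix.cons_val,
    show (2 : Fin 3).castSucc = 2 from rfl, one_pow, one_mul,
    ← pow_mul, ← pow_add]
  ring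

/-- Forms of degree `m` interpolate arbitrary values on the lattice simplex of size `m`. -/
theorem exists_isHomogeneous_eval_latticePoint (m : ℕ) (f : (Fin 3 → ℕ) → ℂ) :
    ∃ q : MvPolynomial (Fin 4) ℂ, q.IsHomogeneous m ∧
      ∀ β : Fin 3 → ℕ, ∑ i, β i ≤ m → eval (latticePoint β) q = f β := by
  suffices H : ∀ k ≤ m + 1, ∃ q : MvPolynomial (Fin 4) ℂ, q.IsHomogeneous m ∧
      ∀ β : Fin 3 → ℕ, ∑ i, β i < k → eval (latticePoint β) q = f β by
    obtain ⟨q, hq, hq'⟩ := H (m + 1) le_rfl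
    exact ⟨q, hq, fun β hβ => hq' β (by omega)⟩
  intro k
  induction k with
  | zero => exact fun _ => ⟨0, isHomogeneous_zero _ _ _, fun β hβ => absurd hβ (by omega)⟩
  | succ k ih =>
    intro hk
    obtain ⟨q, hq, hq'⟩ := ih (by omega)
    let c : (Fin 3 → ℕ) → ℂ := fun α =>
      (f α - eval (latticePoint α) q) / eval (latticePoint α) (fallingForm m α)
    refine ⟨q + ∑ α ∈ Finset.piAntidiag Finset.univ k, C (c α) * fallingForm m α,
      hq.add (IsHomogeneous.sum _ _ _ fun α hα => ?_), fun β hβ => ?_⟩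
    · have hα' : ∑ i, α i = k := (Finset.mem_piAntidiag.1 hα).1
      exact (isHomogeneous_fallingForm (by omega)).C_mul _
    · rw [map_add, map_sum]
      simp only [map_mul, eval_C]
      rcases Nat.lt_succ_iff_lt_or_eq.1 hβ with hlt | heq
      · rw [hq' β hlt, Finset.sum_eq_zero, add_zero]
        intro α hα
        have hα' : ∑ i, α i = k := (Finset.mem_piAntidiag.1 hα).1
        rw [eval_latticePoint_fallingForm_eq_zero (by omega), mul_zero]
        rintro rfl
        omega
      · rw [Finset.sum_eq_single β]
        · simp only [c]
          rw [div_mul_cancel₀ _ (eval_latticePoint_fallingForm_self_ne_zero m β)]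
          ring
        · intro α hα hne
          have hα' : ∑ i, α i = k := (Finset.mem_piAntidiag.1 hα).1
          rw [eval_latticePoint_fallingForm_eq_zero (by omega) hne.symm, mul_zero]
        · intro hβ'
          exact absurd (Finset.mem_piAntidiag.2 ⟨heq, fun i _ => Finset.mem_univ i⟩) hβ'

/-- Exponentials with distinct bases `2 ^ e k` interpolate on an initial segment of `ℕ`. -/
theorem exists_sum_mul_two_pow_pow_eq {κ : Type*} [Fintype κ] {e : κ → ℕ}
    (he : Function.Injective e) {t : ℕ} (ht : t ≤ Fintype.card κ) (ρ : Fin t → ℂ) :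
    ∃ c : κ → ℂ, ∀ j : Fin t, ∑ k, c k * ((2 : ℂ) ^ e k) ^ (j : ℕ) = ρ j := by
  classical
  obtain ⟨g⟩ : Nonempty (Fin t ↪ κ) := Function.Embedding.nonempty_of_card_le (by simpa using ht)
  have hinj : Function.Injective fun i : Fin t => (2 : ℂ) ^ e (g i) := by
    intro i j hij
    have : (2 : ℕ) ^ e (g i) = 2 ^ e (g j) := by
      simp only at hij
      exact_mod_cast hij
    exact g.injective (he (Nat.pow_right_injective le_rfl this))
  have hdet : IsUnit (Matrix.vandermonde fun i : Fin t => (2 : ℂ) ^ e (g i)) :=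
    (Matrix.isUnit_iff_isUnit_det _).2 (Matrix.det_vandermonde_ne_zero_iff.2 hinj).isUnit
  obtain ⟨d, hd⟩ := Matrix.vecMul_surjective_iff_isUnit.2 hdet ρ
  refine ⟨fun k => ∑ i, if g i = k then d i else 0, fun j => ?_⟩
  rw [← congrFun hd j]
  simp only [Finset.sum_mul, Matrix.vecMul, dotProduct, Matrix.vandermonde_apply]
  rw [Finset.sum_comm]
  refine Finset.sum_congr rfl fun i _ => ?_
  simp [ite_mul]

theorem weight_injective {n a b a' b' : ℕ} (ha : a < n) (ha' : a' < n)
    (h : a + n * b = a' + n * b') : a = a' ∧ b = b' := by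
  have h₁ := congrArg (· % n) h
  have h₂ := congrArg (· / n) h
  simp only [Nat.add_mul_mod_self_left, Nat.mod_eq_of_lt ha, Nat.mod_eq_of_lt ha'] at h₁
  have hn : 0 < n := by omega
  simp only [Nat.add_mul_div_left _ _ hn, Nat.div_eq_of_lt ha, Nat.div_eq_of_lt ha',
    zero_add] at h₂
  exact ⟨h₁, h₂⟩

theorem card_piAntidiag_fin_three (k : ℕ) :
    (Finset.piAntidiag (Finset.univ : Finset (Fin 3)) k).card = (k + 2).choose 2 := by
  have : (Finset.piAntidiag (Finset.univ : Finset (Fin 3)) k).card =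
      (Finset.finsuppAntidiag (Finset.univ : Finset (Fin 3)) k).card := by
    refine (Finset.card_bij (fun (f : Fin 3 →₀ ℕ) _ => (f : Fin 3 → ℕ)) ?_ ?_ ?_).symm
    · intro f hf
      simpa using hf
    · exact fun f _ g _ h => DFunLike.coe_injective h
    · intro f hf
      exact ⟨Finsupp.equivFunOnFinite.symm f, by simpa using hf, by simp⟩
  rw [this, Finset.card_finsuppAntidiag_nat_eq_choose, Finset.card_univ, Fintype.card_fin,
    show 3 + k - 1 = k + 2 by omega, Nat.choose_symm_add]

/-- Forms of degree `m` interpolate arbitrary values on `binom(m+2, 2)` points of the curve. -/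
theorem exists_isHomogeneous_eval_curvePoint {m t : ℕ} (ht : t ≤ (m + 2).choose 2)
    (ρ : Fin t → ℂ) :
    ∃ q : MvPolynomial (Fin 4) ℂ, q.IsHomogeneous m ∧
      ∀ j : Fin t, eval (curvePoint m j) q = ρ j := by
  let A := Finset.piAntidiag (Finset.univ : Finset (Fin 3)) m
  have hA : ∀ α : A, ∑ i, (α : Fin 3 → ℕ) i = m := fun α => (Finset.mem_piAntidiag.1 α.2).1
  have he : Function.Injective fun α : A => (α : Fin 3 → ℕ) 1 + (m + 2) * (α : Fin 3 → ℕ) 2 := by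
    intro α β h
    have hα := hA α
    have hβ := hA β
    rw [Fin.sum_univ_three] at hα hβ
    obtain ⟨h₁, h₂⟩ := weight_injective (by omega) (by omega) h
    refine Subtype.ext (funext fun i => ?_)
    fin_cases i
    · change (α : Fin 3 → ℕ) 0 = (β : Fin 3 → ℕ) 0
      omega
    · exact h₁
    · exact h₂
  obtain ⟨c, hc⟩ := exists_sum_mul_two_pow_pow_eq he
    (by simpa [A, card_piAntidiag_fin_three] using ht) ρ
  refine ⟨∑ α, C (c α) * fallingForm m α, IsHomogeneous.sum _ _ _ fun α _ =>
    (isHomogeneous_fallingForm (hA α).le).C_mul _, fun j => ?_⟩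
  simp only [map_sum, map_mul, eval_C, eval_curvePoint_fallingForm (hA _), hc]

/-- If the exponents in `U` agree modulo 3 in the value of `α₀ - α₁`, the products of the
corresponding forms with the coordinates `x₀, x₁, x₂` interpolate arbitrary values on `3 * #U`
points of the curve. -/
theorem exists_isHomogeneous_sum_mul_eval_curvePoint {m r : ℕ} {U : Finset (Fin 3 → ℕ)}
    (hU : ∀ α ∈ U, ∑ i, α i = m) (hr : ∀ α ∈ U, (α 0 + 2 * α 1) % 3 = r)
    (ρ : Fin (3 * U.card) → ℂ) :
    ∃ h : Fin 3 → MvPolynomial (Fin 4) ℂ, (∀ i, (h i).IsHomogeneous m) ∧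
      (∀ i, ∀ β : Fin 3 → ℕ, ∑ i, β i ≤ m → β ∉ U → eval (latticePoint β) (h i) = 0) ∧
      ∀ j : Fin (3 * U.card),
        ∑ i : Fin 3, curvePoint m j i.castSucc * eval (curvePoint m j) (h i) = ρ j := by
  let w : Fin 3 → ℕ := ![0, 1, m + 2]
  have he : Function.Injective fun p : Fin 3 × U =>
      w p.1 + ((p.2 : Fin 3 → ℕ) 1 + (m + 2) * (p.2 : Fin 3 → ℕ) 2) := by
    rintro ⟨i, α, hα⟩ ⟨j, β, hβ⟩ h
    have hα₁ := hU α hα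
    have hβ₁ := hU β hβ
    have hα₂ := hr α hα
    have hβ₂ := hr β hβ
    rw [Fin.sum_univ_three] at hα₁ hβ₁
    have hw : ∀ i : Fin 3, w i = (if i = 1 then 1 else 0) + (m + 2) * (if i = 2 then 1 else 0) := by
      intro i; fin_cases i <;> simp [w]
    simp only [hw] at h
    have h' : ((if i = 1 then 1 else 0) + α 1) + (m + 2) * ((if i = 2 then 1 else 0) + α 2) =
        ((if j = 1 then 1 else 0) + β 1) + (m + 2) * ((if j = 2 then 1 else 0) + β 2) := by
      linarith
    obtain ⟨h₁, h₂⟩ := weight_injective (by split <;> omega) (by split <;> omega) h'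
    have hij : i = j ∧ α 0 = β 0 ∧ α 1 = β 1 ∧ α 2 = β 2 := by
      fin_cases i <;> fin_cases j <;> simp at h₁ h₂ ⊢ <;> omega
    obtain ⟨rfl, h0, h1, h2⟩ := hij
    have : α = β := by
      funext i; fin_cases i <;> assumption
    subst this
    rfl
  obtain ⟨c, hc⟩ := exists_sum_mul_two_pow_pow_eq he (t := 3 * U.card) (by simp) ρ
  refine ⟨fun i => ∑ α : U, C (c (i, α)) * fallingForm m α, fun i => IsHomogeneous.sum _ _ _
    fun α _ => (isHomogeneous_fallingForm (hU α α.2).le).C_mul _, fun i β hβ hβU => ?_,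
    fun j => ?_⟩
  · rw [map_sum]
    refine Finset.sum_eq_zero fun α _ => ?_
    rw [map_mul, eval_latticePoint_fallingForm_eq_zero (by rw [hU α α.2]; exact hβ), mul_zero]
    rintro rfl
    exact hβU α.2
  · have hcurve : ∀ i : Fin 3, curvePoint m j i.castSucc = ((2 : ℂ) ^ w i) ^ (j : ℕ) := by
      intro i; fin_cases i <;> simp [curvePoint, w]
    rw [← hc j, Fintype.sum_prod_type]
    refine Finset.sum_congr rfl fun i _ => ?_
    rw [map_sum, Finset.mul_sum]
    refine Finset.sum_congr rfl fun α _ => ?_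
    rw [map_mul, eval_C, eval_curvePoint_fallingForm (hU α α.2), hcurve]
    simp only [pow_add, mul_pow]
    ring

/-! ### A configuration of points imposing independent conditions -/

/-- The bivector with prescribed coordinates at `e₀₁`, `e₀₂`, `e₁₂`, `e₁₃`, `e₂₃` and vanishing
coordinate at `e₀₃`. -/
def bivector {R : Type*} [Zero R] (a b c d e : R) : Pairs → R := fun S =>
  if S = pair 0 1 then a else if S = pair 0 2 then b else if S = pair 1 2 then c else
    if S = pair 1 3 then d else if S = pair 2 3 then e else 0

theorem wedgeCoord_bivector {R : Type*} [CommRing R] (v : Fin 4 → R) (a b c d e : R) :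
    wedgeCoord v (bivector a b c d e) =
      ![v 0 * c - v 1 * b + v 2 * a, v 0 * d + v 3 * a, v 0 * e + v 3 * b] := by
  have h01 : bivector a b c d e (pair 0 1) = a := by simp [bivector]
  have h02 : bivector a b c d e (pair 0 2) = b := by
    simp [bivector, show pair 0 2 ≠ pair 0 1 by decide]
  have h12 : bivector a b c d e (pair 1 2) = c := by
    simp [bivector, show pair 1 2 ≠ pair 0 1 by decide, show pair 1 2 ≠ pair 0 2 by decide]
  have h13 : bivector a b c d e (pair 1 3) = d := by
    simp [bivector, show pair 1 3 ≠ pair 0 1 by decide, show pair 1 3 ≠ pair 0 2 by decide,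
      show pair 1 3 ≠ pair 1 2 by decide]
  have h23 : bivector a b c d e (pair 2 3) = e := by
    simp [bivector, show pair 2 3 ≠ pair 0 1 by decide, show pair 2 3 ≠ pair 0 2 by decide,
      show pair 2 3 ≠ pair 1 2 by decide, show pair 2 3 ≠ pair 1 3 by decide]
  have h03 : bivector a b c d e (pair 0 3) = 0 := by
    simp [bivector, show pair 0 3 ≠ pair 0 1 by decide, show pair 0 3 ≠ pair 0 2 by decide,
      show pair 0 3 ≠ pair 1 2 by decide, show pair 0 3 ≠ pair 1 3 by decide,
      show pair 0 3 ≠ pair 2 3 by decide]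
  simp only [wedgeCoord, h01, h02, h12, h13, h23, h03, mul_zero, sub_zero]

theorem map_bivector {R R' : Type*} [Zero R] [Zero R'] (φ : R → R') (hφ : φ 0 = 0)
    (a b c d e : R) :
    (fun S => φ (bivector a b c d e S)) = bivector (φ a) (φ b) (φ c) (φ d) (φ e) := by
  funext S
  simp only [bivector]
  split_ifs <;> first | rfl | exact hφ

/-- The lattice points of the simplex of size `m` outside `U`, together with `3 * #U` points of
the curve, impose independent conditions on bivectors of forms of degree `m`. -/
theorem exists_bivector_lattice_curve {m r : ℕ} {U : Finset (Fin 3 → ℕ)}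
    (hU : ∀ α ∈ U, ∑ i, α i = m) (hr : ∀ α ∈ U, (α 0 + 2 * α 1) % 3 = r)
    (hcard : 3 * U.card ≤ (m + 2).choose 2)
    (τ : (Fin 3 → ℕ) → Fin 3 → ℂ) (σ : Fin (3 * U.card) → Fin 3 → ℂ) :
    ∃ q : Pairs → MvPolynomial (Fin 4) ℂ, (∀ S, (q S).IsHomogeneous m) ∧
      (∀ β : Fin 3 → ℕ, ∑ i, β i ≤ m → β ∉ U →
        wedgeCoord (latticePoint β) (fun S => eval (latticePoint β) (q S)) = τ β) ∧
      ∀ j : Fin (3 * U.card),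
        wedgeCoord (curvePoint m j) (fun S => eval (curvePoint m j) (q S)) = σ j := by
  obtain ⟨d, hd, hd'⟩ := exists_isHomogeneous_eval_curvePoint hcard fun j => σ j 1
  obtain ⟨e, he, he'⟩ := exists_isHomogeneous_eval_curvePoint hcard fun j => σ j 2
  obtain ⟨a, ha, ha'⟩ := exists_isHomogeneous_eval_latticePoint m fun β =>
    τ β 1 - ((β 0 : ℂ) + 1) * eval (latticePoint β) d
  obtain ⟨b, hb, hb'⟩ := exists_isHomogeneous_eval_latticePoint m fun β =>
    τ β 2 - ((β 0 : ℂ) + 1) * eval (latticePoint β) e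
  obtain ⟨c, hc, hc'⟩ := exists_isHomogeneous_eval_latticePoint m fun β =>
    (τ β 0 + ((β 1 : ℂ) + 1) * eval (latticePoint β) b
      - ((β 2 : ℂ) + 1) * eval (latticePoint β) a) / ((β 0 : ℂ) + 1)
  obtain ⟨h, hh, hh', hh''⟩ := exists_isHomogeneous_sum_mul_eval_curvePoint hU hr fun j =>
    σ j 0 - (curvePoint m j 0 * eval (curvePoint m j) c - curvePoint m j 1 *
      eval (curvePoint m j) b + curvePoint m j 2 * eval (curvePoint m j) a)
  refine ⟨bivector (a + h 2) (b - h 1) (c + h 0) d e, fun S => ?_, fun β hβ hβU => ?_,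
    fun j => ?_⟩
  · simp only [bivector]
    split_ifs
    exacts [ha.add (hh 2), hb.sub (hh 1), hc.add (hh 0), hd, he, isHomogeneous_zero _ _ _]
  · have hne : (β 0 : ℂ) + 1 ≠ 0 := Nat.cast_add_one_ne_zero _
    have h0 : latticePoint β 0 = (β 0 : ℂ) + 1 := rfl
    have h1 : latticePoint β 1 = (β 1 : ℂ) + 1 := rfl
    have h2 : latticePoint β 2 = (β 2 : ℂ) + 1 := rfl
    have h3 : latticePoint β 3 = 1 := rfl
    rw [map_bivector _ (map_zero _), wedgeCoord_bivector]
    simp only [map_add, map_sub, hh' _ β hβ hβU, add_zero, sub_zero, h0, h1, h2, h3, one_mul]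
    funext i
    fin_cases i
    · simp only [Fin.zero_eta, Matrix.cons_val]
      rw [hc' β hβ, mul_div_cancel₀ _ hne]
      ring
    · simp [ha' β hβ]
    · simp [hb' β hβ]
  · have h0 : curvePoint m j 0 = 1 := by simp [curvePoint]
    have h3 : curvePoint m j 3 = 0 := by simp [curvePoint]
    rw [map_bivector _ (map_zero _), wedgeCoord_bivector]
    have hsum := hh'' j
    simp only [Fin.sum_univ_three, Fin.castSucc_zero, Fin.castSucc_one,
      show (2 : Fin 3).castSucc = 2 from rfl] at hsum
    funext i
    fin_cases i
    · simp only [map_add, map_sub, Fin.zero_eta, Matrix.cons_val]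
      linear_combination hsum
    · simp [h0, h3, hd']
    · simp [h0, h3, he']

theorem exists_subset_piAntidiag_mod_three {m n : ℕ} (hn : 3 * n ≤ (m + 2).choose 2) :
    ∃ (r : ℕ) (U : Finset (Fin 3 → ℕ)), U.card = n ∧ (∀ α ∈ U, ∑ i, α i = m) ∧
      ∀ α ∈ U, (α 0 + 2 * α 1) % 3 = r := by
  obtain ⟨r, -, hr⟩ := Finset.exists_le_card_fiber_of_mul_le_card_of_maps_to
    (s := Finset.piAntidiag (Finset.univ : Finset (Fin 3)) m) (t := Finset.range 3) (n := n)
    (f := fun α => (α 0 + 2 * α 1) % 3) (fun α _ => by simpa using Nat.mod_lt _ (by norm_num))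
    ⟨0, by simp⟩ (by simpa [card_piAntidiag_fin_three] using hn)
  obtain ⟨U, hU, rfl⟩ := Finset.exists_subset_card_eq hr
  refine ⟨r, U, rfl, fun α hα => ?_, fun α hα => (Finset.mem_filter.1 (hU hα)).2⟩
  exact (Finset.mem_piAntidiag.1 (Finset.mem_filter.1 (hU hα)).1).1

/-- The lattice simplex of size `m`. -/
def latticeSimplex (m : ℕ) : Finset (Fin 3 → ℕ) :=
  (Finset.range (m + 1)).biUnion fun k => Finset.piAntidiag Finset.univ k

theorem mem_latticeSimplex {m : ℕ} {β : Fin 3 → ℕ} : β ∈ latticeSimplex m ↔ ∑ i, β i ≤ m := by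
  simp [latticeSimplex]

theorem card_latticeSimplex (m : ℕ) : (latticeSimplex m).card = (m + 3).choose 3 := by
  rw [latticeSimplex, Finset.card_biUnion]
  · simp only [card_piAntidiag_fin_three]
    exact Nat.sum_range_add_choose m 2
  · intro k _ l _ hkl
    refine Finset.disjoint_left.2 fun β hk hl => ?_
    exact hkl ((Finset.mem_piAntidiag.1 hk).1.symm.trans (Finset.mem_piAntidiag.1 hl).1)

theorem bound_le_choose_add (m : ℕ) :
    ((m + 4) * (m + 3) * (m + 1) / 2 - m - 2) / 3 ≤
      (m + 3).choose 3 + 2 * ((m + 2).choose 2 / 3) := by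
  have h2 : 2 * (m + 2).choose 2 = (m + 2) * (m + 1) := by
    have := Nat.descFactorial_eq_factorial_mul_choose (m + 2) 2
    simp only [Nat.descFactorial, Nat.factorial] at this
    simp at this
    linarith
  have h3 : 6 * (m + 3).choose 3 = (m + 3) * (m + 2) * (m + 1) := by
    have := Nat.descFactorial_eq_factorial_mul_choose (m + 3) 3
    simp only [Nat.descFactorial, Nat.factorial] at this
    simp at this
    linarith
  have hmod : (m + 2).choose 2 % 3 ≠ 2 := by
    intro h
    have hm : (m + 2) * (m + 1) % 3 = 1 := by omega
    have : m % 3 = 0 ∨ m % 3 = 1 ∨ m % 3 = 2 := by omega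
    rcases this with h' | h' | h' <;> simp [Nat.mul_mod, Nat.add_mod, h'] at hm
  have hprod : (m + 4) * (m + 3) * (m + 1) =
      2 * (3 * (m + 3).choose 3 + 2 * (m + 2).choose 2 + m + 1) := by
    nlinarith
  rw [hprod, Nat.mul_div_cancel_left _ (by norm_num)]
  omega

theorem exists_points_surjective {m s : ℕ}
    (hs : s ≤ ((m + 4) * (m + 3) * (m + 1) / 2 - m - 2) / 3) :
    ∃ v : Fin s → Fin 4 → ℂ, (∀ i, v i 0 ≠ 0) ∧ ∀ τ : Fin s → Fin 3 → ℂ,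
      ∃ q : Pairs → MvPolynomial (Fin 4) ℂ, (∀ S, (q S).IsHomogeneous m) ∧
        ∀ i, wedgeCoord (v i) (fun S => eval (v i) (q S)) = τ i := by
  classical
  have hn : 3 * ((m + 2).choose 2 / 3) ≤ (m + 2).choose 2 := Nat.mul_div_le _ _
  obtain ⟨r, U, hcard, hU, hr⟩ := exists_subset_piAntidiag_mod_three hn
  have hsub : U ⊆ latticeSimplex m := fun α hα => mem_latticeSimplex.2 (hU α hα).le
  let Z := latticeSimplex m \ U
  have hZ : Z.card + U.card = (m + 3).choose 3 := by
    rw [Finset.card_sdiff_add_card_eq_card hsub, card_latticeSimplex]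
  obtain ⟨g⟩ : Nonempty (Fin s ↪ Z ⊕ Fin (3 * U.card)) := by
    refine Function.Embedding.nonempty_of_card_le ?_
    have := bound_le_choose_add m
    simp only [Fintype.card_fin, Fintype.card_sum, Fintype.card_coe]
    omega
  let p : Z ⊕ Fin (3 * U.card) → Fin 4 → ℂ :=
    Sum.elim (fun β => latticePoint β) fun j => curvePoint m j
  refine ⟨fun i => p (g i), fun i => ?_, fun τ => ?_⟩
  · change p (g i) 0 ≠ 0
    rcases g i with β | j
    · exact Nat.cast_add_one_ne_zero (R := ℂ) _
    · exact one_ne_zero (α := ℂ)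
  · let τ' : Z ⊕ Fin (3 * U.card) → Fin 3 → ℂ := Function.extend g τ 0
    obtain ⟨q, hq, hlat, hcur⟩ := exists_bivector_lattice_curve hU hr (hcard ▸ hn)
      (fun β => if h : β ∈ Z then τ' (Sum.inl ⟨β, h⟩) else 0) fun j => τ' (Sum.inr j)
    have key : ∀ x, wedgeCoord (p x) (fun S => eval (p x) (q S)) = τ' x := by
      rintro (⟨β, hβ⟩ | j)
      · have hβ' := Finset.mem_sdiff.1 hβ
        exact (hlat β (mem_latticeSimplex.1 hβ'.1) hβ'.2).trans (dif_pos hβ)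
      · exact hcur j
    exact ⟨q, hq, fun i => (key (g i)).trans (g.injective.extend_apply _ _ _)⟩

/-- Surjectivity of evaluation is an open condition on the tuple of points. -/
theorem exists_polynomial_of_surjective {m s : ℕ} (v₀ : Fin s → Fin 4 → ℂ)
    (h₀ : ∀ τ : Fin s → Fin 3 → ℂ,
      ∃ q : Pairs → MvPolynomial (Fin 4) ℂ, (∀ S, (q S).IsHomogeneous m) ∧
        ∀ i, wedgeCoord (v₀ i) (fun S => eval (v₀ i) (q S)) = τ i) :
    ∃ D : MvPolynomial (Fin s × Fin 4) ℂ, eval (fun t => v₀ t.1 t.2) D ≠ 0 ∧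
      ∀ v : Fin s → Fin 4 → ℂ, eval (fun t => v t.1 t.2) D ≠ 0 → ∀ τ : Fin s → Fin 3 → ℂ,
        ∃ q : Pairs → MvPolynomial (Fin 4) ℂ, (∀ S, (q S).IsHomogeneous m) ∧
          ∀ i, wedgeCoord (v i) (fun S => eval (v i) (q S)) = τ i := by
  classical
  choose Q hQ hQ' using fun k : Fin s × Fin 3 => h₀ fun i a => if (i, a) = k then 1 else 0
  let P : Matrix (Fin s × Fin 3) (Fin s × Fin 3) (MvPolynomial (Fin s × Fin 4) ℂ) :=
    Matrix.of fun x k => wedgeCoord (fun l => X (x.1, l))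
      (fun S => rename (fun l => (x.1, l)) (Q k S)) x.2
  have hP : ∀ (v : Fin s → Fin 4 → ℂ) x k, eval (fun t => v t.1 t.2) (P x k) =
      wedgeCoord (v x.1) (fun S => eval (v x.1) (Q k S)) x.2 := by
    intro v x k
    simp only [P, Matrix.of_apply, map_wedgeCoord, eval_X, eval_rename, Function.comp_def]
  refine ⟨P.det, ?_, fun v hv τ => ?_⟩
  · have : (eval fun t : Fin s × Fin 4 => v₀ t.1 t.2).mapMatrix P = 1 := by
      ext x k
      rw [RingHom.mapMatrix_apply, Matrix.map_apply, hP, hQ' k x.1, Matrix.one_apply]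
    rw [RingHom.map_det, this, Matrix.det_one]
    exact one_ne_zero
  · rw [RingHom.map_det] at hv
    obtain ⟨c, hc⟩ := Matrix.mulVec_surjective_iff_isUnit.2
      ((Matrix.isUnit_iff_isUnit_det _).2 hv.isUnit) fun x : Fin s × Fin 3 => τ x.1 x.2
    refine ⟨fun S => ∑ k, C (c k) * Q k S, fun S => IsHomogeneous.sum _ _ _ fun k _ =>
      (hQ k S).C_mul _, fun i => funext fun a => ?_⟩
    simp only [map_sum, map_mul, eval_C]
    rw [wedgeCoord_sum_mul, ← congrFun hc (i, a)]
    refine Finset.sum_congr rfl fun k _ => ?_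
    exact (mul_comm _ _).trans (congrArg (· * c k) (hP v (i, a) k).symm)

/-- Theorem 5.3(iii) (`ℙ³`, bundle `Q*(m+1)`): if
`s ≤ ⌊((m+4)(m+3)(m+1)/2 − m − 2)/3⌋`, then for a general tuple of nonzero vectors
`v_1,…,v_s ∈ ℂ⁴`, the evaluation map sending a tensor `M ∈ Hom(S^mℂ⁴, Λ²ℂ⁴)`
(represented by six homogeneous degree-`m` component polynomials `(q_S)_{|S|=2}`) to
`(M(v_i^m) mod v_i ∧ ℂ⁴)_i ∈ ⊕_i Λ²ℂ⁴/(v_i ∧ ℂ⁴)` is surjective; equivalently, the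
tensors with `M(v_i^m) ∧ v_i = 0` for all `i` form a subspace of codimension `3s`. -/
theorem statement15 (m s : ℕ)
    (hs : s ≤ ((m + 4) * (m + 3) * (m + 1) / 2 - m - 2) / 3) :
    ∃ D : MvPolynomial (Fin s × Fin 4) ℂ, D ≠ 0 ∧
      ∀ v : Fin s → Fin 4 → ℂ, (∀ i, v i ≠ 0) →
        MvPolynomial.eval (fun t => v t.1 t.2) D ≠ 0 →
        ∀ y : Fin s → ExteriorAlgebra ℂ (Fin 4 → ℂ),
          (∀ i, y i ∈ ⋀[ℂ]^2 (Fin 4 → ℂ)) →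
          ∃ q : {S : Finset (Fin 4) // S.card = 2} → MvPolynomial (Fin 4) ℂ,
            (∀ S, (q S).IsHomogeneous m) ∧
            ∀ i, ∃ u : Fin 4 → ℂ,
              tval 4 2 q (v i) - y i = ExteriorAlgebra.ι ℂ (v i) * ExteriorAlgebra.ι ℂ u := by
  obtain ⟨v₀, hv₀, hsurj⟩ := exists_points_surjective hs
  obtain ⟨D, hD, hgen⟩ := exists_polynomial_of_surjective v₀ hsurj
  refine ⟨D * ∏ i, X (i, 0), fun h => ?_, fun v _ hv y hy => ?_⟩
  · have := congrArg (eval fun t => v₀ t.1 t.2) h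
    simp only [map_mul, map_prod, eval_X, map_zero] at this
    exact mul_ne_zero hD (Finset.prod_ne_zero_iff.2 fun i _ => hv₀ i) this
  · simp only [map_mul, map_prod, eval_X] at hv
    choose c hc using fun i => exists_coords_of_mem_exteriorPower_two (hy i)
    obtain ⟨q, hq, hq'⟩ := hgen v (left_ne_zero_of_mul hv) fun i => wedgeCoord (v i) (c i)
    refine ⟨q, hq, fun i => ?_⟩
    rw [hc i]
    exact exists_eq_ι_mul_ι
      (Finset.prod_ne_zero_iff.1 (right_ne_zero_of_mul hv) i (Finset.mem_univ i)) (hq' i)
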